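/- Let L ≥ d and let A ∈ ℂ^{d×d} be diagonalizable with pairwise distinct, real and positive eigenvalues, say A = S · diag(λ₀, …, λ_{d−1}) · S⁻¹ with S invertible and 0 < λ_k ∈ ℝ pairwise distinct. If every coordinate of ψ := S⁻¹φ is nonzero, then the family {A^ℓ φ : ℓ = 0, …, L−1} is a full-spark frame for ℂ^d. -/

import Mathlib

/-!
After the change of basis `S`, the vector `A ^ ℓ φ` becomes `(λ_k ^ ℓ ψ_k)_k`. So for exponents
`n_0, …, n_{d-1}` the matrix with rows `A ^ n_i φ` factors as `(λ_k ^ n_i) · diag ψ · Sᵀ`, and only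
the invertibility of the generalized Vandermonde matrix `(λ_k ^ n_i)` is at stake
(`genVandermonde_det_ne_zero`). A vanishing combination of its rows is a real polynomial with at
most `d` monomials that has the `d` distinct positive roots `λ_k`. By Descartes' rule of signs, a
nonzero polynomial has fewer positive roots than monomials
(`eq_zero_of_card_support_le`), so the combination is trivial.
-/

/-- A family of `L` vectors in `ℂ^d` has full spark if every subset of `d` of them
spans `ℂ^d`. -/
def IsFullSpark {d L : ℕ} (f : Fin L → (Fin d → ℂ)) : Prop :=
  ∀ g : Fin d → Fin L, Function.Injective g →
    Submodule.span ℂ (Set.range fun i => f (g i)) = ⊤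

/-- A full-spark frame for `ℂ^d` is a spanning family with full spark. -/
def IsFullSparkFrame {d L : ℕ} (f : Fin L → (Fin d → ℂ)) : Prop :=
  Submodule.span ℂ (Set.range f) = ⊤ ∧ IsFullSpark f

/-- Each sign change needs two consecutive monomials, so there are fewer sign changes than
monomials. -/
lemma signVariations_lt_card_support {P : Polynomial ℝ} (hP : P ≠ 0) :
    P.signVariations < P.support.card := by
  induction h : P.support.card using Nat.strong_induction_on generalizing P with
  | _ n ih =>
    have hc := Polynomial.card_support_eraseLead_add_one hP
    by_cases he : P.eraseLead = 0
    -- if `P.eraseLead = 0`, then `P` is a monomial, which has no sign change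
    · have h1 := P.eraseLead_add_monomial_natDegree_leadingCoeff
      rw [he, zero_add] at h1
      rw [← h1, Polynomial.signVariations_monomial]
      omega
    · have h1 := ih _ (by omega) he rfl
      have h2 := P.signVariations_le_eraseLead_succ
      omega

lemma eq_zero_of_card_support_le {d : ℕ} (lam : Fin d → ℝ) (hpos : ∀ k, 0 < lam k)
    (hinj : Function.Injective lam) (P : Polynomial ℝ) (hcard : P.support.card ≤ d)
    (hroot : ∀ k, P.eval (lam k) = 0) : P = 0 := by
  by_contra hP
  have h1 := signVariations_lt_card_support hP
  have h2 := P.roots_countP_pos_le_signVariations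
  have h3 : (Finset.univ.image lam).val ≤ P.roots.filter (0 < ·) := by
    rw [Multiset.le_iff_subset (Finset.nodup _)]
    intro x hx
    obtain ⟨k, -, rfl⟩ := Finset.mem_image.1 (Finset.mem_def.2 hx)
    exact Multiset.mem_filter.2 ⟨(Polynomial.mem_roots hP).2 (hroot k), hpos k⟩
  have h4 := Multiset.card_le_card h3
  rw [← Multiset.countP_eq_card_filter, Finset.card_val, Finset.card_image_of_injective _ hinj,
    Finset.card_univ, Fintype.card_fin] at h4
  omega

lemma genVandermonde_det_ne_zero {d : ℕ} (lam : Fin d → ℝ) (hpos : ∀ k, 0 < lam k)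
    (hinj : Function.Injective lam) (n : Fin d → ℕ) (hn : Function.Injective n) :
    (Matrix.of fun i k => lam k ^ n i).det ≠ 0 := by
  intro h0
  obtain ⟨c, hc, hcM⟩ := Matrix.exists_vecMul_eq_zero_iff.2 h0
  let P : Polynomial ℝ := ∑ i, Polynomial.monomial (n i) (c i)
  have hcoeff : ∀ m, P.coeff m = ∑ i, if n i = m then c i else 0 := fun m => by
    simp [P, Polynomial.finsetSum_coeff, Polynomial.coeff_monomial]
  have hsupp : P.support ⊆ Finset.univ.image n := by
    intro m hm
    rw [Polynomial.mem_support_iff, hcoeff] at hm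
    obtain ⟨i, -, hi⟩ := Finset.exists_ne_zero_of_sum_ne_zero hm
    exact Finset.mem_image.2 ⟨i, Finset.mem_univ i, by by_contra h; simp [h] at hi⟩
  have hP : P = 0 := by
    refine eq_zero_of_card_support_le lam hpos hinj P ?_ fun k => ?_
    · exact (Finset.card_le_card hsupp).trans (Finset.card_image_le.trans (by simp))
    · have := congrFun hcM k
      simpa [P, Polynomial.eval_finsetSum, Polynomial.eval_monomial, Matrix.vecMul,
        dotProduct] using this
  refine hc (funext fun j => ?_)
  have hj := hcoeff (n j)
  simpa [hP, hn.eq_iff] using hj.symm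

lemma conj_diagonal_pow {d : ℕ} (S : Matrix (Fin d) (Fin d) ℂ) (hS : IsUnit S.det)
    (v : Fin d → ℂ) (m : ℕ) :
    (S * Matrix.diagonal v * S⁻¹) ^ m = S * Matrix.diagonal (v ^ m) * S⁻¹ := by
  induction m with
  | zero => simp [Matrix.mul_nonsing_inv S hS]
  | succ m ih =>
    have hd : Matrix.diagonal (v ^ (m + 1)) = Matrix.diagonal (v ^ m) * Matrix.diagonal v := by
      rw [Matrix.diagonal_mul_diagonal, pow_succ]
      rfl
    rw [pow_succ, ih, hd]
    simp only [Matrix.mul_assoc]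
    rw [Matrix.nonsing_inv_mul_cancel_left _ _ hS]

open Matrix in
/-- **Full-spark dynamical frames with positive real eigenvalues.** Let `L ≥ d` and
`A = S diag(λ) S⁻¹` with `S` invertible, where the eigenvalues `λ_k` are real, positive and
pairwise distinct. If every coordinate of `ψ = S⁻¹ φ` is nonzero, then
`{A^ℓ φ}_{ℓ=0}^{L-1}` is a full-spark frame for `ℂ^d`. -/
theorem dynamical_full_spark_frame_posReal (d L : ℕ) (hL : d ≤ L) (lam : Fin d → ℝ)
    (hpos : ∀ k, 0 < lam k) (hinj : Function.Injective lam)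
    (A S : Matrix (Fin d) (Fin d) ℂ) (hS : IsUnit S.det)
    (hA : A = S * Matrix.diagonal (fun k => (lam k : ℂ)) * S⁻¹) (φ : Fin d → ℂ)
    (hφ : ∀ i : Fin d, S⁻¹.mulVec φ i ≠ 0) :
    IsFullSparkFrame (fun ℓ : Fin L => (A ^ (ℓ : ℕ)).mulVec φ) := by
  have hspark : IsFullSpark (fun ℓ : Fin L => (A ^ (ℓ : ℕ)).mulVec φ) := by
    intro g hg
    let M : Matrix (Fin d) (Fin d) ℝ := Matrix.of fun i k => lam k ^ (g i : ℕ)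
    have hM : M.det ≠ 0 := genVandermonde_det_ne_zero lam hpos hinj (fun i => (g i : ℕ))
      (Fin.val_injective.comp hg)
    let F : Matrix (Fin d) (Fin d) ℂ :=
      M.map Complex.ofRealHom * Matrix.diagonal (S⁻¹.mulVec φ) * Sᵀ
    have hF : IsUnit F := by
      rw [Matrix.isUnit_iff_isUnit_det, Matrix.det_mul, Matrix.det_mul, Matrix.det_transpose,
        Matrix.det_diagonal, isUnit_iff_ne_zero]
      refine mul_ne_zero (mul_ne_zero ?_ (Finset.prod_ne_zero_iff.2 fun i _ => hφ i)) hS.ne_zero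
      rw [← RingHom.mapMatrix_apply, ← RingHom.map_det]
      exact (map_ne_zero _).2 hM
    have hrow : (fun i => (A ^ (g i : ℕ)).mulVec φ) = F.row := by
      funext i j
      rw [hA, conj_diagonal_pow S hS, ← Matrix.mulVec_mulVec, ← Matrix.mulVec_mulVec]
      simp only [F, M, Matrix.row, Matrix.mul_apply, Matrix.mulVec, dotProduct]
      refine Finset.sum_congr rfl fun k _ => ?_
      simp [Matrix.diagonal_apply, Matrix.mulVec, dotProduct, mul_comm]
    change Submodule.span ℂ (Set.range fun i => (A ^ (g i : ℕ)).mulVec φ) = ⊤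
    rw [hrow]
    exact (Matrix.linearIndependent_rows_of_isUnit hF).span_eq_top_of_card_eq_finrank' (by simp)
  refine ⟨?_, hspark⟩
  rw [eq_top_iff, ← hspark (Fin.castLE hL) (Fin.castLE_injective hL)]
  exact Submodule.span_mono (Set.range_subset_iff.2 fun i => ⟨Fin.castLE hL i, rfl⟩)
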